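/- The localized Hall algebra DH(R) is free as a right DH₀(R)-module, with basis consisting of the elements E_{A,B} indexed by all pairs of isomorphism classes of objects A, B ∈ A. -/

import Mathlib

open CategoryTheory CategoryTheory.Limits Opposite

noncomputable section

universe u

variable (k : Type) [Field k] [Fintype k]
variable (R : Type u) [SmallCategory R] [Abelian R] [Linear k R] [EnoughProjectives R]

/-- The objects `A` of `R` such that `Hom(M, A)` is a finite set for every `M`. -/
def IsFinHom (A : R) : Prop := ∀ M : R, Finite (M ⟶ A)

/-- The Euler form `⟨M,A⟩ = dim Hom(M,A) - dim Ext¹(M,A)`. -/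
def euler (M A : R) : ℤ :=
  (Module.finrank k (M ⟶ A) : ℤ) -
    (Module.finrank k (((_root_.Ext k R 1).obj (op M)).obj A) : ℤ)

/-- The set of relations defining the Grothendieck group of `R`. -/
def sesSet : Set (FreeAbelianGroup R) :=
  {x | ∃ S : ShortComplex R, S.ShortExact ∧
    x = FreeAbelianGroup.of S.X₂ - FreeAbelianGroup.of S.X₁ - FreeAbelianGroup.of S.X₃}

/-- The Grothendieck group `K(R)`. -/
abbrev K0 := FreeAbelianGroup R ⧸ AddSubgroup.closure (sesSet R)

/-- The class of an object in `K(R)`. -/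
def K0.cls (X : R) : K0 R := QuotientAddGroup.mk (FreeAbelianGroup.of X)

/-- The set of relations defining the Grothendieck group of the subcategory `A`. -/
def sesSetA : Set (FreeAbelianGroup {A : R // IsFinHom R A}) :=
  {x | ∃ (S : ShortComplex R) (h1 : IsFinHom R S.X₁) (h2 : IsFinHom R S.X₂)
      (h3 : IsFinHom R S.X₃), S.ShortExact ∧
    x = FreeAbelianGroup.of ⟨S.X₂, h2⟩ - FreeAbelianGroup.of ⟨S.X₁, h1⟩ -
      FreeAbelianGroup.of ⟨S.X₃, h3⟩}

/-- The Grothendieck group `K(A)`. -/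
abbrev KA := FreeAbelianGroup {A : R // IsFinHom R A} ⧸ AddSubgroup.closure (sesSetA R)

/-- The class of an object of `A` in `K(A)`. -/
def KA.cls (A : {A : R // IsFinHom R A}) : KA R := QuotientAddGroup.mk (FreeAbelianGroup.of A)

/-- `R` is hereditary, i.e. of global dimension at most 1. -/
def Hereditary : Prop :=
  ∀ X Y : R, Subsingleton (((_root_.Ext k R 2).obj (op X)).obj Y)

/-- Condition (c): cancellation for projectives. -/
def CondC : Prop :=
  ∀ P Q M : R, Projective P → Projective Q → Projective M →
    Nonempty ((M ⊞ P) ≅ (M ⊞ Q)) → Nonempty (P ≅ Q)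

/-- Condition (d): every element of `K(R)` is a `ℚ`-linear combination of classes of
objects of `A`. -/
def CondD : Prop :=
  ∀ x : K0 R, ∃ n : ℕ, n ≠ 0 ∧ (n : ℤ) • x ∈
    AddSubgroup.closure (Set.range fun A : {A : R // IsFinHom R A} => K0.cls R A.1)

/-- Condition (e). -/
def CondE : Prop :=
  ∀ A B : R, IsFinHom R A → IsFinHom R B → K0.cls R A = K0.cls R B →
    ∀ P : R, Projective P → Nat.card (P ⟶ A) = Nat.card (P ⟶ B)

structure Z2Cx where
  X0 : R
  X1 : R
  d0 : X0 ⟶ X1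
  d1 : X1 ⟶ X0
  d01 : d0 ≫ d1 = 0
  d10 : d1 ≫ d0 = 0

namespace Z2Cx

variable {R}

/-- Morphisms of `ℤ/2`-graded complexes. -/
@[ext] structure Hom (M N : Z2Cx R) where
  f0 : M.X0 ⟶ N.X0
  f1 : M.X1 ⟶ N.X1
  comm0 : M.d0 ≫ f1 = f0 ≫ N.d0
  comm1 : M.d1 ≫ f0 = f1 ≫ N.d1

instance : CategoryStruct (Z2Cx R) where
  Hom := Hom
  id M := ⟨𝟙 _, 𝟙 _, by simp, by simp⟩
  comp {M N P} f g := ⟨f.f0 ≫ g.f0, f.f1 ≫ g.f1, by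
      rw [← Category.assoc, f.comm0, Category.assoc, g.comm0, Category.assoc], by
      rw [← Category.assoc, f.comm1, Category.assoc, g.comm1, Category.assoc]⟩

@[simp] lemma id_f0 (M : Z2Cx R) : (𝟙 M : Hom M M).f0 = 𝟙 M.X0 := rfl
@[simp] lemma id_f1 (M : Z2Cx R) : (𝟙 M : Hom M M).f1 = 𝟙 M.X1 := rfl
@[simp] lemma comp_f0 {M N P : Z2Cx R} (f : M ⟶ N) (g : N ⟶ P) :
    (f ≫ g).f0 = Hom.f0 f ≫ Hom.f0 g := rfl
@[simp] lemma comp_f1 {M N P : Z2Cx R} (f : M ⟶ N) (g : N ⟶ P) :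
    (f ≫ g).f1 = Hom.f1 f ≫ Hom.f1 g := rfl

instance : Category (Z2Cx R) where
  id_comp f := by apply Hom.ext <;> simp
  comp_id f := by apply Hom.ext <;> simp
  assoc f g h := by apply Hom.ext <;> simp

variable (R)

/-- The two-term complex `C_f` associated to a morphism `f`, concentrated so that
`X1 = P`, `X0 = Q`, `d1 = f`, `d0 = 0`. -/
def Cf {P Q : R} (f : P ⟶ Q) : Z2Cx R := ⟨Q, P, 0, f, by simp, by simp⟩

/-- The shift involution `†`: it interchanges the gradings and negates the differentials. -/
def dagger (M : Z2Cx R) : Z2Cx R :=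
  ⟨M.X1, M.X0, -M.d1, -M.d0, by simp [M.d10], by simp [M.d01]⟩

/-- The acyclic complex `K_P` with `d1 = 𝟙 P` and `d0 = 0`. -/
def KP (P : R) : Z2Cx R := ⟨P, P, 0, 𝟙 P, by simp, by simp⟩

/-- Direct sum of `ℤ/2`-graded complexes. -/
def dsum (M N : Z2Cx R) : Z2Cx R where
  X0 := M.X0 ⊞ N.X0
  X1 := M.X1 ⊞ N.X1
  d0 := biprod.map M.d0 N.d0
  d1 := biprod.map M.d1 N.d1
  d01 := by ext <;> simp [M.d01, N.d01]
  d10 := by ext <;> simp [M.d10, N.d10]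

/-- Degree `0` homology of a `ℤ/2`-graded complex. -/
def H0 (M : Z2Cx R) : R := (ShortComplex.mk M.d1 M.d0 M.d10).homology

/-- Degree `1` homology of a `ℤ/2`-graded complex. -/
def H1 (M : Z2Cx R) : R := (ShortComplex.mk M.d0 M.d1 M.d01).homology

/-- The homology complex `H•(M•)`, with zero differentials. -/
def Hcx (M : Z2Cx R) : Z2Cx R := ⟨H0 R M, H1 R M, 0, 0, by simp, by simp⟩

/-- A complex is acyclic if its homology vanishes. -/
def Acyclic (M : Z2Cx R) : Prop := IsZero (H0 R M) ∧ IsZero (H1 R M)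

end Z2Cx

namespace Z2Cx

variable {R}

/-- A short exact sequence of `ℤ/2`-graded complexes, exhibiting an extension of `M` by `N`
(short exactness of a sequence of complexes is componentwise short exactness). -/
structure ExtSES (M N : Z2Cx R) where
  E : Z2Cx R
  i : N ⟶ E
  p : E ⟶ M
  w0 : Hom.f0 i ≫ Hom.f0 p = 0
  w1 : Hom.f1 i ≫ Hom.f1 p = 0
  ex0 : (ShortComplex.mk (Hom.f0 i) (Hom.f0 p) w0).ShortExact
  ex1 : (ShortComplex.mk (Hom.f1 i) (Hom.f1 p) w1).ShortExact

/-- Equivalence of extensions of complexes. -/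
def ExtEquiv (M N : Z2Cx R) (s t : ExtSES M N) : Prop :=
  ∃ φ : s.E ≅ t.E, s.i ≫ φ.hom = t.i ∧ φ.hom ≫ t.p = s.p

/-- The set `Ext¹_{C(R)}(M•, N•)` of equivalence classes of extensions of `M•` by `N•`
in the category of `ℤ/2`-graded complexes over `R`. -/
def ExtCl (M N : Z2Cx R) := Quot (ExtEquiv M N)

end Z2Cx

/-- Complexes of projectives with homology in the subcategory `A`, i.e. objects
of `C_fin(P)`. -/
def FinCx (M : Z2Cx R) : Prop :=
  Projective M.X0 ∧ Projective M.X1 ∧ IsFinHom R (Z2Cx.H0 R M) ∧ IsFinHom R (Z2Cx.H1 R M)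

attribute [local instance] Classical.propDecidable

/-- The class `[M•] = [M₀] - [M₁]` in `K(R)` of a `ℤ/2`-graded complex. -/
def clsOf (M : Z2Cx R) : K0 R := K0.cls R M.X0 - K0.cls R M.X1

/-- Isomorphism of `ℤ/2`-graded complexes, as a relation. -/
def cxRel (M N : Z2Cx R) : Prop := Nonempty (M ≅ N)

/-- Isomorphism classes of `ℤ/2`-graded complexes. -/
def CxCls := Quot (cxRel R)

/-- The isomorphism class of a complex. -/
def ccls (M : Z2Cx R) : CxCls R := Quot.mk _ M

/-- The isomorphism class of the middle term of an extension class. -/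
def extMid {M N : Z2Cx R} : Z2Cx.ExtCl M N → CxCls R :=
  Quot.lift (fun s => ccls R s.E) (fun s t h => by
    obtain ⟨φ, -, -⟩ := h
    exact Quot.sound ⟨φ⟩)

/-- `|Ext¹_{C(R)}(M•,N•)_{P•}|` : the number of extension classes of `M•` by `N•` whose
middle term has isomorphism class `c`. -/
def extCount (M N : Z2Cx R) (c : CxCls R) : ℕ :=
  Nat.card {x : Z2Cx.ExtCl M N // extMid R x = c}

/-- The `ℚ`-valued extension of the Euler form to `K(R) × K(R)`
(which exists by condition (d)). -/
structure EulerData where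
  eQ : K0 R →+ K0 R →+ ℚ
  compat : ∀ (M A : R), IsFinHom R A →
    eQ (K0.cls R M) (K0.cls R A) = euler k R M A

/-- A choice, for every complex of projectives `M•`, of the classes `[M₁⁺]` and `[M₀⁻]`
of the components of the canonical decomposition `M• = M•⁺ ⊕ M•⁻ = C_f ⊕ C_g^†`. -/
structure DecData where
  cplus : Z2Cx R → K0 R
  cminus : Z2Cx R → K0 R
  spec : ∀ M : Z2Cx R, Projective M.X0 → Projective M.X1 →
    ∃ (P Q P' Q' : R) (f : P ⟶ Q) (g : P' ⟶ Q'),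
      Projective P ∧ Projective Q ∧ Projective P' ∧ Projective Q' ∧
      Mono f ∧ Mono g ∧
      Nonempty (M ≅ Z2Cx.dsum R (Z2Cx.Cf R f) (Z2Cx.dagger R (Z2Cx.Cf R g))) ∧
      cplus M = K0.cls R P ∧ cminus M = K0.cls R P'

variable {k R}

/-- `μ(M•,N•) = Σ_{i,j} ⟨[Mᵢ^{ε(j)}], [N_{j+1}^{ε(i)}]⟩`. -/
def mu (ed : EulerData k R) (dd : DecData R) (M N : Z2Cx R) : ℚ :=
  ed.eQ (K0.cls R M.X0 - dd.cminus M) (dd.cplus N) +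
    ed.eQ (dd.cplus M) (K0.cls R N.X1 - dd.cplus N) +
    ed.eQ (dd.cminus M) (K0.cls R N.X0 - dd.cminus N) +
    ed.eQ (K0.cls R M.X1 - dd.cplus M) (dd.cminus N)

/-- `h(M•,N•) = q^{μ(M•,N•)} ⬝ |Hom_{C(R)}(H•(M•), H•(N•))|`. -/
def hVal (ed : EulerData k R) (dd : DecData R) (M N : Z2Cx R) : ℝ :=
  (Fintype.card k : ℝ) ^ ((mu ed dd M N : ℚ) : ℝ) *
    (Nat.card (Z2Cx.Hcx R M ⟶ Z2Cx.Hcx R N) : ℝ)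

/-- The structure constants of the Hall algebra `H(C_fin(P))`:
the coefficient of the basis element `c` in `[M•] ⋆ [N•]`. -/
def hallCoeff (v : ℝ) (ed : EulerData k R) (dd : DecData R) (M N : Z2Cx R)
    (c : CxCls R) : ℂ :=
  (((v ^ (((ed.eQ (K0.cls R M.X0) (K0.cls R N.X0) +
      ed.eQ (K0.cls R M.X1) (K0.cls R N.X1) : ℚ)) : ℝ) *
    (extCount R M N c : ℝ) / hVal ed dd M N : ℝ)) : ℂ)

variable (k R)

/-- Objects of `C_fin(P)`. -/
def FCx := {M : Z2Cx R // FinCx R M}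

/-- Isomorphism classes of objects of `C_fin(P)`. -/
def FCls := Quot (fun M N : FCx R => Nonempty (M.1 ≅ N.1))

/-- The isomorphism class of an object of `C_fin(P)`. -/
def fcls (M : FCx R) : FCls R := Quot.mk _ M

/-- Comparison of isomorphism classes in `C_fin(P)` with isomorphism classes of
arbitrary complexes. -/
def fc2c : FCls R → CxCls R :=
  Quot.lift (fun M => ccls R M.1) (fun _ _ h => Quot.sound h)

/-- The symmetrized Euler form `(α,β) = ⟨α,β⟩ + ⟨β,α⟩`. -/
def sForm (ed : EulerData k R) (a b : K0 R) : ℚ := ed.eQ a b + ed.eQ b a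

open ZeroObject in
/-- The zero complex. -/
def zeroCx : Z2Cx R := ⟨0, 0, 0, 0, by simp, by simp⟩

/-- All the data constituting the localized Hall algebra `DH(R)`:
the Hall algebra `H(C_fin(P))` (a free `ℂ`-module on the isomorphism classes of
`C_fin(P)`, with the Hall multiplication `mulH` determined by the structure constants
`hallCoeff`), and its localization `D` at the classes of acyclic complexes, together
with the elements `K_α ⋆ K_β^† = KK (α, β)` and the canonical map `loc`.  The axioms
express that `D` is precisely the localization of `H(C_fin(P))` at the classes of
acyclic complexes, with the `ℂ[K(R) × K(R)]`-bimodule structure of the paper. -/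
structure DHSetting where
  v : ℝ
  v_pos : 0 < v
  v_sq : v ^ 2 = (Fintype.card k : ℝ)
  ed : EulerData k R
  dd : DecData R
  /-- the Hall multiplication on `H(C_fin(P))` -/
  mulH : ((FCls R) →₀ ℂ) →ₗ[ℂ] ((FCls R) →₀ ℂ) →ₗ[ℂ] ((FCls R) →₀ ℂ)
  mulH_single : ∀ (M N : FCx R) (c : FCls R),
    (mulH (Finsupp.single (fcls R M) 1) (Finsupp.single (fcls R N) 1)) c
      = hallCoeff v ed dd M.1 N.1 (fc2c R c)
  /-- the carrier of the localized Hall algebra `DH(R)` -/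
  D : Type u
  [grp : AddCommGroup D]
  [mod : Module ℂ D]
  /-- the multiplication `⋆` of `DH(R)` -/
  mulD : D →ₗ[ℂ] D →ₗ[ℂ] D
  one : D
  one_mul : ∀ d, mulD one d = d
  mul_one : ∀ d, mulD d one = d
  /-- the canonical map `H(C_fin(P)) → DH(R)` -/
  loc : ((FCls R) →₀ ℂ) →ₗ[ℂ] D
  loc_one : ∀ h : FinCx R (zeroCx R),
    loc (Finsupp.single (fcls R ⟨zeroCx R, h⟩) 1) = one
  loc_mul : ∀ x y, mulD (loc x) (loc y) = loc (mulH x y)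
  /-- the elements `K_α ⋆ K_β^†` -/
  KK : K0 R × K0 R → D
  KK_zero : KK 0 = one
  KK_mul : ∀ a b, mulD (KK a) (KK b) = KK (a + b)
  KK_P : ∀ (P : R), Projective P → ∀ h : FinCx R (Z2Cx.KP R P),
    loc (Finsupp.single (fcls R ⟨Z2Cx.KP R P, h⟩) 1) = KK (K0.cls R P, 0)
  KK_Pd : ∀ (P : R), Projective P → ∀ h : FinCx R (Z2Cx.dagger R (Z2Cx.KP R P)),
    loc (Finsupp.single (fcls R ⟨Z2Cx.dagger R (Z2Cx.KP R P), h⟩) 1) = KK (0, K0.cls R P)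
  /-- the bimodule rule `(K_α ⋆ K_β^†) ⋆ [M•] = v^{(α-β,[M•])} [M•] ⋆ (K_α ⋆ K_β^†)` -/
  comm_rule : ∀ (a b : K0 R) (M : FCx R),
    mulD (KK (a, b)) (loc (Finsupp.single (fcls R M) 1)) =
      (((v ^ ((sForm k R ed (a - b) (clsOf R M.1) : ℚ) : ℝ) : ℝ) : ℂ)) •
        mulD (loc (Finsupp.single (fcls R M) 1)) (KK (a, b))
  /-- multiplication of elements in standard form is induced by the Hall multiplication -/
  mul_general : ∀ (x : (FCls R) →₀ ℂ) (M : FCx R) (a b a' b' : K0 R),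
    mulD (mulD (loc x) (KK (a, b))) (mulD (loc (Finsupp.single (fcls R M) 1)) (KK (a', b'))) =
      (((v ^ ((sForm k R ed (a - b) (clsOf R M.1) : ℚ) : ℝ) : ℝ) : ℂ)) •
        mulD (loc (mulH x (Finsupp.single (fcls R M) 1))) (KK (a + a', b + b'))
  /-- every element of the localization has the standard form `x ⋆ K_α ⋆ K_β^†` -/
  span : ∀ d : D, ∃ (x : (FCls R) →₀ ℂ) (a b : K0 R), d = mulD (loc x) (KK (a, b))
  /-- the kernel of the localization map is exactly the torsion with respect to the
  classes of acyclic complexes -/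
  loc_ker : ∀ x, loc x = 0 ↔ ∃ (K : Z2Cx R) (h : FinCx R K),
    Z2Cx.Acyclic R K ∧ mulH x (Finsupp.single (fcls R ⟨K, h⟩) 1) = 0

attribute [instance] DHSetting.grp DHSetting.mod

variable {k R}

/-- The element `E_{M•} = v^{⟨[M₁⁺]-[M₀⁻],[M•]⟩} K_{-[M₁⁺]} ⋆ K^†_{-[M₀⁻]} ⋆ [M•]`
of the localized Hall algebra. -/
def Eelt (S : DHSetting k R) (M : Z2Cx R) (h : FinCx R M) : S.D :=
  (((S.v ^ ((S.ed.eQ (S.dd.cplus M - S.dd.cminus M) (clsOf R M) : ℚ) : ℝ) : ℝ) : ℂ)) •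
    S.mulD (S.KK (-(S.dd.cplus M), -(S.dd.cminus M)))
      (S.loc (Finsupp.single (fcls R ⟨M, h⟩) 1))

variable (R)

/-- Isomorphism classes of objects of the subcategory `A`. -/
def IsoA := Quot (fun A B : {A : R // IsFinHom R A} => Nonempty (A.1 ≅ B.1))

variable {R}

/-! An extension of a complex of projectives `M•` by a contractible complex `K•` splits, so
`[M•] ⋆ [K•]` is a unit multiple of `[M• ⊕ K•]`. In particular `[M•] ⋆ K_{[P]} ⋆ K_{[Q]}^†` is a
unit multiple of `[M• ⊕ K_P ⊕ K_Q^†]`.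

*Generation.* Every `M•` is `C_f ⊕ C_g^†` with `f`, `g` injective, and by Schanuel's lemma it
becomes isomorphic to `C_A ⊕ C_B^†`, where `A = H₀(M•)` and `B = H₁(M•)`, after adding complexes
`K_P ⊕ K_Q^†` to both. Hence `[M•]` is a unit multiple of some `[C_A ⊕ C_B^†] ⋆ K_α ⋆ K_β^†`.

*Independence.* Multiplying finitely many elements `[C_A ⊕ C_B^†] ⋆ K_α ⋆ K_β^†` by one common
`K_α' ⋆ K_β'^†` turns them into unit multiples of classes `[C_A ⊕ C_B^† ⊕ K_P ⊕ K_Q^†]`. The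
homology of such a complex determines `(A, B)`, and then the classes in `K(R)` of its cycles
determine `([P], [Q])`, even after adding one more contractible complex. A relation in the
localization holds in the Hall algebra after multiplication by an acyclic, hence contractible,
complex, where it is a relation between distinct basis elements.

Finally `E_{A,B}` is a unit multiple of `[C_A ⊕ C_B^†] ⋆ K_α ⋆ K_β^†` for a pair `(α, β)` depending
only on `(A, B)`, so the `E_{A,B} ⋆ K_γ` are a rescaled and reindexed basis. -/

namespace Z2Cx

section Preadditive

variable {C : Type u} [SmallCategory C] [Abelian C]

@[ext]
lemma hom_ext {M N : Z2Cx C} {f g : M ⟶ N} (h0 : Hom.f0 f = Hom.f0 g)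
    (h1 : Hom.f1 f = Hom.f1 g) : f = g :=
  Hom.ext h0 h1

@[simp]
lemma f0_comp {M N P : Z2Cx C} (f : M ⟶ N) (g : N ⟶ P) :
    Hom.f0 (f ≫ g) = Hom.f0 f ≫ Hom.f0 g := rfl

@[simp]
lemma f1_comp {M N P : Z2Cx C} (f : M ⟶ N) (g : N ⟶ P) :
    Hom.f1 (f ≫ g) = Hom.f1 f ≫ Hom.f1 g := rfl

lemma d0_comp_f1 {M N : Z2Cx C} (f : M ⟶ N) : M.d0 ≫ Hom.f1 f = Hom.f0 f ≫ N.d0 :=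
  Hom.comm0 f

lemma d1_comp_f0 {M N : Z2Cx C} (f : M ⟶ N) : M.d1 ≫ Hom.f0 f = Hom.f1 f ≫ N.d1 :=
  Hom.comm1 f

instance (M N : Z2Cx C) : Zero (M ⟶ N) := ⟨Hom.mk 0 0 (by simp) (by simp)⟩

instance (M N : Z2Cx C) : Add (M ⟶ N) :=
  ⟨fun f g => Hom.mk (Hom.f0 f + Hom.f0 g) (Hom.f1 f + Hom.f1 g)
    (by simp [d0_comp_f1]) (by simp [d1_comp_f0])⟩

instance (M N : Z2Cx C) : Neg (M ⟶ N) :=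
  ⟨fun f => Hom.mk (-Hom.f0 f) (-Hom.f1 f) (by simp [d0_comp_f1]) (by simp [d1_comp_f0])⟩

section

variable {M N : Z2Cx C} (f g : M ⟶ N)

@[simp] lemma zero_f0 : Hom.f0 (0 : M ⟶ N) = 0 := rfl
@[simp] lemma zero_f1 : Hom.f1 (0 : M ⟶ N) = 0 := rfl
@[simp] lemma add_f0 : Hom.f0 (f + g) = Hom.f0 f + Hom.f0 g := rfl
@[simp] lemma add_f1 : Hom.f1 (f + g) = Hom.f1 f + Hom.f1 g := rfl
@[simp] lemma neg_f0 : Hom.f0 (-f) = -Hom.f0 f := rfl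
@[simp] lemma neg_f1 : Hom.f1 (-f) = -Hom.f1 f := rfl

end

instance (M N : Z2Cx C) : AddCommGroup (M ⟶ N) :=
  { AddGroup.ofLeftAxioms (G := M ⟶ N) (fun _ _ _ => by ext <;> simp [add_assoc])
      (fun _ => by ext <;> simp) (fun _ => by ext <;> simp) with
    add_comm := fun _ _ => by ext <;> simp [add_comm] }

instance : Preadditive (Z2Cx C) where
  add_comp _ _ _ _ _ _ := by ext <;> simp
  comp_add _ _ _ _ _ _ := by ext <;> simp

def isoMk {M N : Z2Cx C} (e0 : M.X0 ≅ N.X0) (e1 : M.X1 ≅ N.X1)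
    (comm0 : M.d0 ≫ e1.hom = e0.hom ≫ N.d0) (comm1 : M.d1 ≫ e0.hom = e1.hom ≫ N.d1) : M ≅ N where
  hom := Hom.mk e0.hom e1.hom comm0 comm1
  inv := Hom.mk e0.inv e1.inv
    (by rw [Iso.comp_inv_eq, Category.assoc, comm0, Iso.inv_hom_id_assoc])
    (by rw [Iso.comp_inv_eq, Category.assoc, comm1, Iso.inv_hom_id_assoc])

/-- The functor `M• ↦ M₀`. -/
def eval0 : Z2Cx C ⥤ C where
  obj M := M.X0
  map f := Hom.f0 f

/-- The functor `M• ↦ M₁`. -/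
def eval1 : Z2Cx C ⥤ C where
  obj M := M.X1
  map f := Hom.f1 f

/-- The functor sending `M•` to the short complex `M₁ ⟶ M₀ ⟶ M₁`, whose homology is `H₀(M•)`. -/
def sc0 : Z2Cx C ⥤ ShortComplex C where
  obj M := ShortComplex.mk M.d1 M.d0 M.d10
  map f := ⟨Hom.f1 f, Hom.f0 f, Hom.f1 f, (d1_comp_f0 f).symm, (d0_comp_f1 f).symm⟩

/-- The shift involution `†` as a functor. -/
def daggerFunctor : Z2Cx C ⥤ Z2Cx C where
  obj M := dagger C M
  map {M N} f := Hom.mk (M := dagger C M) (N := dagger C N) (Hom.f1 f) (Hom.f0 f)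
    (by simp [dagger, d1_comp_f0]) (by simp [dagger, d0_comp_f1])

instance : (sc0 (C := C)).Additive where
  map_add := by intros; rfl

instance : (daggerFunctor (C := C)).Additive where
  map_add := by intros; rfl

/-- The direct sum of complexes as a biproduct diagram. -/
def dsumBicone (M N : Z2Cx C) : BinaryBicone M N where
  pt := dsum C M N
  fst := Hom.mk (M := dsum C M N) biprod.fst biprod.fst (by simp [dsum]) (by simp [dsum])
  snd := Hom.mk (M := dsum C M N) biprod.snd biprod.snd (by simp [dsum]) (by simp [dsum])
  inl := Hom.mk (N := dsum C M N) biprod.inl biprod.inl (by simp [dsum]) (by simp [dsum])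
  inr := Hom.mk (N := dsum C M N) biprod.inr biprod.inr (by simp [dsum]) (by simp [dsum])
  inl_fst := hom_ext biprod.inl_fst biprod.inl_fst
  inl_snd := hom_ext biprod.inl_snd biprod.inl_snd
  inr_fst := hom_ext biprod.inr_fst biprod.inr_fst
  inr_snd := hom_ext biprod.inr_snd biprod.inr_snd

lemma dsumBicone_total (M N : Z2Cx C) :
    (dsumBicone M N).fst ≫ (dsumBicone M N).inl + (dsumBicone M N).snd ≫ (dsumBicone M N).inr =
      𝟙 (dsum C M N) :=
  hom_ext biprod.total biprod.total

def dsumBiconeIsBilimit (M N : Z2Cx C) : (dsumBicone M N).IsBilimit :=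
  isBinaryBilimitOfTotal _ (dsumBicone_total M N)

instance : HasBinaryBiproducts (Z2Cx C) where
  has_binary_biproduct M N := ⟨⟨_, dsumBiconeIsBilimit M N⟩⟩

def mapDsum {D : Type*} [Category* D] [Preadditive D] [HasBinaryBiproducts D] (F : Z2Cx C ⥤ D)
    [F.Additive] (M N : Z2Cx C) : F.obj (dsum C M N) ≅ F.obj M ⊞ F.obj N :=
  haveI := preservesBinaryBiproducts_of_preservesBiproducts F
  biprod.uniqueUpToIso _ _ (isBinaryBilimitOfPreserves F (dsumBiconeIsBilimit M N))

def dsumIsoBiprod (M N : Z2Cx C) : dsum C M N ≅ M ⊞ N :=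
  biprod.uniqueUpToIso M N (dsumBiconeIsBilimit M N)

def dsumMapIso {M M' N N' : Z2Cx C} (e : M ≅ M') (f : N ≅ N') : dsum C M N ≅ dsum C M' N' :=
  dsumIsoBiprod M N ≪≫ biprod.mapIso e f ≪≫ (dsumIsoBiprod M' N').symm

def dsumComm (M N : Z2Cx C) : dsum C M N ≅ dsum C N M :=
  dsumIsoBiprod M N ≪≫ biprod.braiding M N ≪≫ (dsumIsoBiprod N M).symm

def dsumAssoc (M N L : Z2Cx C) : dsum C (dsum C M N) L ≅ dsum C M (dsum C N L) :=
  dsumIsoBiprod _ _ ≪≫ biprod.mapIso (dsumIsoBiprod M N) (Iso.refl L) ≪≫ biprod.associator M N L ≪≫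
    (dsumIsoBiprod _ _ ≪≫ biprod.mapIso (Iso.refl M) (dsumIsoBiprod N L)).symm

def dsumExchange (M N K L : Z2Cx C) :
    dsum C (dsum C M N) (dsum C K L) ≅ dsum C (dsum C M K) (dsum C N L) :=
  dsumAssoc _ _ _ ≪≫ dsumMapIso (Iso.refl M) ((dsumAssoc _ _ _).symm ≪≫
    dsumMapIso (dsumComm N K) (Iso.refl L) ≪≫ dsumAssoc _ _ _) ≪≫ (dsumAssoc _ _ _).symm

def daggerDagger (M : Z2Cx C) : dagger C (dagger C M) ≅ M :=
  isoMk (Iso.refl _) (Iso.refl _) (by simp [dagger]) (by simp [dagger])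

def daggerDsum (M N : Z2Cx C) : dagger C (dsum C M N) ≅ dsum C (dagger C M) (dagger C N) :=
  mapDsum daggerFunctor M N ≪≫ (dsumIsoBiprod _ _).symm

end Preadditive

end Z2Cx

namespace Z2Cx

section Homology

variable {C : Type u} [SmallCategory C] [Abelian C]

def H0MapIso {M N : Z2Cx C} (e : M ≅ N) : H0 C M ≅ H0 C N :=
  (sc0 ⋙ ShortComplex.homologyFunctor C).mapIso e

def H0Dsum (M N : Z2Cx C) : H0 C (dsum C M N) ≅ H0 C M ⊞ H0 C N :=
  mapDsum (sc0 ⋙ ShortComplex.homologyFunctor C) M N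

/-- Degree `1` homology is degree `0` homology of the shift, up to the signs of the
differentials. -/
def H1IsoH0Dagger (M : Z2Cx C) : H1 C M ≅ H0 C (dagger C M) :=
  ShortComplex.homologyMapIso
    (ShortComplex.isoMk (S₁ := .mk M.d0 M.d1 M.d01) (S₂ := sc0.obj (dagger C M))
      (-Iso.refl _) (Iso.refl _) (-Iso.refl _)
      (show (-𝟙 M.X0) ≫ (-M.d0) = M.d0 ≫ 𝟙 M.X1 by simp)
      (show 𝟙 M.X1 ≫ (-M.d1) = M.d1 ≫ (-𝟙 M.X0) by simp))

def H1MapIso {M N : Z2Cx C} (e : M ≅ N) : H1 C M ≅ H1 C N :=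
  H1IsoH0Dagger M ≪≫ H0MapIso (daggerFunctor.mapIso e) ≪≫ (H1IsoH0Dagger N).symm

def H1Dsum (M N : Z2Cx C) : H1 C (dsum C M N) ≅ H1 C M ⊞ H1 C N :=
  H1IsoH0Dagger _ ≪≫ H0MapIso (daggerDsum M N) ≪≫ H0Dsum _ _ ≪≫
    biprod.mapIso (H1IsoH0Dagger M).symm (H1IsoH0Dagger N).symm

def H1Dagger (M : Z2Cx C) : H1 C (dagger C M) ≅ H0 C M :=
  H1IsoH0Dagger _ ≪≫ H0MapIso (daggerDagger M)

end Homology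

section Contractible

variable {C : Type u} [SmallCategory C] [Abelian C]

/-- The morphism of complexes `d s + s d` defined by a homotopy `s`. -/
def nullHomotopicMap {M N : Z2Cx C} (s0 : M.X0 ⟶ N.X1) (s1 : M.X1 ⟶ N.X0) : M ⟶ N :=
  Hom.mk (M.d0 ≫ s1 + s0 ≫ N.d1) (M.d1 ≫ s0 + s1 ≫ N.d0)
    (by simp [reassoc_of% M.d01, N.d10]) (by simp [reassoc_of% M.d10, N.d01])

lemma comp_nullHomotopicMap {L M N : Z2Cx C} (g : L ⟶ M) (s0 : M.X0 ⟶ N.X1) (s1 : M.X1 ⟶ N.X0) :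
    g ≫ nullHomotopicMap s0 s1 = nullHomotopicMap (Hom.f0 g ≫ s0) (Hom.f1 g ≫ s1) := by
  ext <;> simp [nullHomotopicMap, reassoc_of% d0_comp_f1 g, reassoc_of% d1_comp_f0 g]

lemma nullHomotopicMap_comp {L M N : Z2Cx C} (s0 : L.X0 ⟶ M.X1) (s1 : L.X1 ⟶ M.X0) (g : M ⟶ N) :
    nullHomotopicMap s0 s1 ≫ g = nullHomotopicMap (s0 ≫ Hom.f1 g) (s1 ≫ Hom.f0 g) := by
  ext <;> simp [nullHomotopicMap, d0_comp_f1, d1_comp_f0]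

/-- A morphism of complexes is null-homotopic if it is of the form `d s + s d`. -/
def NullHomotopic {M N : Z2Cx C} (f : M ⟶ N) : Prop :=
  ∃ (s0 : M.X0 ⟶ N.X1) (s1 : M.X1 ⟶ N.X0), f = nullHomotopicMap s0 s1

namespace NullHomotopic

variable {L M N : Z2Cx C}

lemma comp_left {f : M ⟶ N} (hf : NullHomotopic f) (g : L ⟶ M) : NullHomotopic (g ≫ f) := by
  obtain ⟨s0, s1, rfl⟩ := hf
  exact ⟨_, _, comp_nullHomotopicMap g s0 s1⟩

lemma comp_right {f : L ⟶ M} (hf : NullHomotopic f) (g : M ⟶ N) : NullHomotopic (f ≫ g) := by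
  obtain ⟨s0, s1, rfl⟩ := hf
  exact ⟨_, _, nullHomotopicMap_comp s0 s1 g⟩

lemma add {f g : M ⟶ N} (hf : NullHomotopic f) (hg : NullHomotopic g) :
    NullHomotopic (f + g) := by
  obtain ⟨s0, s1, rfl⟩ := hf
  obtain ⟨t0, t1, rfl⟩ := hg
  refine ⟨s0 + t0, s1 + t1, ?_⟩
  ext <;> simp only [nullHomotopicMap, add_f0, add_f1, Preadditive.comp_add,
    Preadditive.add_comp] <;> abel

lemma dagger_map {f : M ⟶ N} (hf : NullHomotopic f) : NullHomotopic (daggerFunctor.map f) := by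
  obtain ⟨s0, s1, rfl⟩ := hf
  exact ⟨-s1, -s0, hom_ext
    (show M.d1 ≫ s0 + s1 ≫ N.d0 = (-M.d1) ≫ (-s0) + (-s1) ≫ (-N.d0) by simp)
    (show M.d0 ≫ s1 + s0 ≫ N.d1 = (-M.d0) ≫ (-s1) + (-s0) ≫ (-N.d1) by simp)⟩

end NullHomotopic

/-- A complex is contractible if its identity is null-homotopic. -/
def Contractible (K : Z2Cx C) : Prop := NullHomotopic (𝟙 K)

namespace Contractible

variable {K L : Z2Cx C}

lemma exists_retraction (hK : Contractible K) (i : K ⟶ L) {r0 : L.X0 ⟶ K.X0} {r1 : L.X1 ⟶ K.X1}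
    (h0 : Hom.f0 i ≫ r0 = 𝟙 K.X0) (h1 : Hom.f1 i ≫ r1 = 𝟙 K.X1) : ∃ ρ : L ⟶ K, i ≫ ρ = 𝟙 K := by
  obtain ⟨s0, s1, h⟩ := hK
  refine ⟨nullHomotopicMap (r0 ≫ s0) (r1 ≫ s1), ?_⟩
  rw [comp_nullHomotopicMap, reassoc_of% h0, reassoc_of% h1, h]

lemma of_iso (hK : Contractible K) (e : K ≅ L) : Contractible L := by
  have : 𝟙 L = e.inv ≫ 𝟙 K ≫ e.hom := by simp
  rw [Contractible, this]
  exact (hK.comp_right e.hom).comp_left e.inv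

lemma dagger (hK : Contractible K) : Contractible (dagger C K) :=
  hK.dagger_map

lemma dsum (hK : Contractible K) (hL : Contractible L) : Contractible (dsum C K L) := by
  have total : NullHomotopic ((dsumBicone K L).fst ≫ 𝟙 K ≫ (dsumBicone K L).inl +
      (dsumBicone K L).snd ≫ 𝟙 L ≫ (dsumBicone K L).inr) :=
    ((hK.comp_right _).comp_left _).add ((hL.comp_right _).comp_left _)
  rwa [Category.id_comp, Category.id_comp, dsumBicone_total] at total

lemma isZero_H0 (hK : Contractible K) : IsZero (H0 C K) := by
  obtain ⟨s0, s1, h⟩ := hK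
  have h0 : 𝟙 K.X0 = K.d0 ≫ s1 + s0 ≫ K.d1 := congrArg Hom.f0 h
  rw [H0, ← ShortComplex.exact_iff_isZero_homology,
    ShortComplex.exact_iff_exact_up_to_refinements]
  intro A x (hx : x ≫ K.d0 = 0)
  refine ⟨A, 𝟙 A, inferInstance, x ≫ s0, ?_⟩
  calc 𝟙 A ≫ x = x ≫ 𝟙 K.X0 := by simp
    _ = (x ≫ s0) ≫ K.d1 := by simp [h0, reassoc_of% hx]

lemma isZero_H1 (hK : Contractible K) : IsZero (H1 C K) :=
  hK.dagger.isZero_H0.of_iso (H1IsoH0Dagger K)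

def H0Dsum (hK : Contractible K) (M : Z2Cx C) : H0 C (Z2Cx.dsum C M K) ≅ H0 C M :=
  Z2Cx.H0Dsum M K ≪≫ (isoBiprodZero hK.isZero_H0).symm

def H1Dsum (hK : Contractible K) (M : Z2Cx C) : H1 C (Z2Cx.dsum C M K) ≅ H1 C M :=
  Z2Cx.H1Dsum M K ≪≫ (isoBiprodZero hK.isZero_H1).symm

end Contractible

lemma contractible_Cf {P Q : C} (f : P ⟶ Q) [IsIso f] : Contractible (Cf C f) :=
  ⟨(inv f : Q ⟶ P), 0, hom_ext (show 𝟙 Q = (0 : Q ⟶ P) ≫ (0 : P ⟶ Q) + inv f ≫ f by simp)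
    (show 𝟙 P = f ≫ inv f + (0 : P ⟶ Q) ≫ (0 : Q ⟶ P) by simp)⟩

lemma contractible_KP (P : C) : Contractible (KP C P) := contractible_Cf (𝟙 P)

end Contractible

end Z2Cx

namespace Z2Cx

section Extensions

variable {C : Type u} [SmallCategory C] [Abelian C] {M N K : Z2Cx C}

lemma extEquiv_of_hom {s t : ExtSES M N} (φ : s.E ⟶ t.E) (hi : s.i ≫ φ = t.i)
    (hp : φ ≫ t.p = s.p) : ExtEquiv M N s t := by
  let φ0 : ShortComplex.mk _ _ s.w0 ⟶ ShortComplex.mk _ _ t.w0 :=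
    ⟨𝟙 _, Hom.f0 φ, 𝟙 _, by simp [← hi], by simp [← hp]⟩
  let φ1 : ShortComplex.mk _ _ s.w1 ⟶ ShortComplex.mk _ _ t.w1 :=
    ⟨𝟙 _, Hom.f1 φ, 𝟙 _, by simp [← hi], by simp [← hp]⟩
  have : IsIso φ0.τ₁ := inferInstanceAs (IsIso (𝟙 _))
  have : IsIso φ0.τ₃ := inferInstanceAs (IsIso (𝟙 _))
  have : IsIso φ1.τ₁ := inferInstanceAs (IsIso (𝟙 _))
  have : IsIso φ1.τ₃ := inferInstanceAs (IsIso (𝟙 _))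
  have : IsIso (Hom.f0 φ) := ShortComplex.isIso₂_of_shortExact_of_isIso₁₃ φ0 s.ex0 t.ex0
  have : IsIso (Hom.f1 φ) := ShortComplex.isIso₂_of_shortExact_of_isIso₁₃ φ1 s.ex1 t.ex1
  exact ⟨isoMk (asIso (Hom.f0 φ)) (asIso (Hom.f1 φ)) (d0_comp_f1 φ) (d1_comp_f0 φ), hi, hp⟩

/-- The trivial extension `0 → N• → M• ⊕ N• → M• → 0`. -/
def trivialExt (M N : Z2Cx C) : ExtSES M N where
  E := dsum C M N
  i := (dsumBicone M N).inr
  p := (dsumBicone M N).fst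
  w0 := biprod.inr_fst
  w1 := biprod.inr_fst
  ex0 := ShortComplex.Splitting.shortExact
    ⟨biprod.snd, biprod.inl, biprod.inr_snd, biprod.inl_fst, (add_comm _ _).trans biprod.total⟩
  ex1 := ShortComplex.Splitting.shortExact
    ⟨biprod.snd, biprod.inl, biprod.inr_snd, biprod.inl_fst, (add_comm _ _).trans biprod.total⟩

lemma extEquiv_trivialExt (hM0 : Projective M.X0) (hM1 : Projective M.X1) (hK : Contractible K)
    (s : ExtSES M K) : ExtEquiv M K s (trivialExt M K) := by
  obtain ⟨ρ, hρ⟩ := hK.exists_retraction s.i s.ex0.splittingOfProjective.f_r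
    s.ex1.splittingOfProjective.f_r
  have hip : s.i ≫ s.p = 0 := hom_ext s.w0 s.w1
  let φ : s.E ⟶ (dsumBicone M K).pt :=
    s.p ≫ (dsumBicone M K).inl + ρ ≫ (dsumBicone M K).inr
  have hi : s.i ≫ φ = (dsumBicone M K).inr := by simp [φ, reassoc_of% hip, reassoc_of% hρ]
  have hp : φ ≫ (dsumBicone M K).fst = s.p := by simp [φ]
  exact extEquiv_of_hom φ hi hp

lemma extCount_eq_ite (hM0 : Projective M.X0) (hM1 : Projective M.X1) (hK : Contractible K)
    (c : CxCls C) : extCount C M K c = if c = ccls C (dsum C M K) then 1 else 0 := by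
  have unique (x : ExtCl M K) : x = Quot.mk _ (trivialExt M K) := by
    obtain ⟨s, rfl⟩ := Quot.exists_rep x
    exact Quot.sound (extEquiv_trivialExt hM0 hM1 hK s)
  split_ifs with hc
  · rw [extCount, Nat.card_eq_one_iff_unique]
    exact ⟨⟨fun x y => Subtype.ext ((unique x).trans (unique y).symm)⟩,
      ⟨⟨Quot.mk _ (trivialExt M K), hc.symm⟩⟩⟩
  · have : IsEmpty {x : ExtCl M K // extMid C x = c} :=
      ⟨fun x => hc (by rw [← x.2, unique x.1]; rfl)⟩
    exact Nat.card_of_isEmpty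

end Extensions

end Z2Cx

section IsoClasses

lemma quot_mk_iso_eq_iff {C ι : Type*} [Category* C] (X : ι → C) {i j : ι} :
    Quot.mk (fun i j => Nonempty (X i ≅ X j)) i = Quot.mk _ j ↔ Nonempty (X i ≅ X j) :=
  Equivalence.quot_mk_eq_iff (r := fun i j => Nonempty (X i ≅ X j))
    ⟨fun _ => ⟨Iso.refl _⟩, fun ⟨e⟩ => ⟨e.symm⟩, fun ⟨e⟩ ⟨f⟩ => ⟨e ≪≫ f⟩⟩ i j

variable {C : Type u} [SmallCategory C]

lemma IsoA.ext {a b : IsoA C} (e : (Quot.out a).1 ≅ (Quot.out b).1) : a = b := by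
  rw [← Quot.out_eq a, ← Quot.out_eq b]
  exact Quot.sound ⟨e⟩

lemma IsoA.exists_out_iso {A : C} (hA : IsFinHom C A) :
    ∃ a : IsoA C, Nonempty ((Quot.out a).1 ≅ A) :=
  ⟨Quot.mk _ ⟨A, hA⟩, (quot_mk_iso_eq_iff Subtype.val).1 (Quot.out_eq _)⟩

variable [Abelian C]

lemma fcls_eq_iff {M N : FCx C} : fcls C M = fcls C N ↔ Nonempty (M.1 ≅ N.1) :=
  quot_mk_iso_eq_iff (fun M : FCx C => M.1)

lemma fc2c_injective : Function.Injective (fc2c C) := by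
  intro a b h
  obtain ⟨M, rfl⟩ := Quot.exists_rep a
  obtain ⟨N, rfl⟩ := Quot.exists_rep b
  exact fcls_eq_iff.2 ((quot_mk_iso_eq_iff id).1 h)

end IsoClasses

section Finiteness

variable {C : Type u} [SmallCategory C]

namespace IsFinHom

variable {A B : C}

lemma of_iso (hA : IsFinHom C A) (e : A ≅ B) : IsFinHom C B := fun M =>
  have := hA M
  Finite.of_equiv _ (e.homToEquiv (Z := M))

lemma of_isZero (hA : IsZero A) : IsFinHom C A := fun M =>
  have : Subsingleton (M ⟶ A) := ⟨fun _ _ => hA.eq_of_tgt _ _⟩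
  inferInstance

lemma biprod [Preadditive C] [HasBinaryBiproducts C] (hA : IsFinHom C A) (hB : IsFinHom C B) :
    IsFinHom C (A ⊞ B) := fun M =>
  have := hA M
  have := hB M
  Finite.of_injective (fun f : M ⟶ A ⊞ B => (f ≫ biprod.fst, f ≫ biprod.snd)) fun _ _ h =>
    biprod.hom_ext _ _ (congrArg Prod.fst h) (congrArg Prod.snd h)

end IsFinHom

namespace FinCx

variable [Abelian C] {M N : Z2Cx C}

lemma dsum (hM : FinCx C M) (hN : FinCx C N) : FinCx C (Z2Cx.dsum C M N) :=
  have := hM.1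
  have := hM.2.1
  have := hN.1
  have := hN.2.1
  ⟨inferInstanceAs (Projective (M.X0 ⊞ N.X0)), inferInstanceAs (Projective (M.X1 ⊞ N.X1)),
    (hM.2.2.1.biprod hN.2.2.1).of_iso (Z2Cx.H0Dsum M N).symm,
    (hM.2.2.2.biprod hN.2.2.2).of_iso (Z2Cx.H1Dsum M N).symm⟩

lemma of_contractible (h0 : Projective M.X0) (h1 : Projective M.X1) (hM : Z2Cx.Contractible M) :
    FinCx C M :=
  ⟨h0, h1, .of_isZero hM.isZero_H0, .of_isZero hM.isZero_H1⟩

lemma KP {P : C} (hP : Projective P) : FinCx C (Z2Cx.KP C P) :=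
  of_contractible hP hP (Z2Cx.contractible_KP P)

lemma dagger_KP {P : C} (hP : Projective P) : FinCx C (Z2Cx.dagger C (Z2Cx.KP C P)) :=
  of_contractible hP hP (Z2Cx.contractible_KP P).dagger

open ZeroObject in
lemma zeroCx : FinCx C (zeroCx C) :=
  of_contractible (inferInstanceAs (Projective (0 : C))) (inferInstanceAs (Projective (0 : C)))
    ⟨0, 0, Z2Cx.hom_ext ((isZero_zero C).eq_of_src _ _) ((isZero_zero C).eq_of_src _ _)⟩

end FinCx

end Finiteness

section GrothendieckGroup

variable {C : Type u} [SmallCategory C] [Abelian C]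

namespace K0

lemma cls_of_shortExact {S : ShortComplex C} (hS : S.ShortExact) :
    cls C S.X₂ = cls C S.X₁ + cls C S.X₃ := by
  have h : cls C S.X₂ - cls C S.X₁ - cls C S.X₃ = 0 :=
    (QuotientAddGroup.eq_zero_iff _).2 (AddSubgroup.subset_closure ⟨S, hS, rfl⟩)
  rwa [sub_sub, sub_eq_zero] at h

lemma cls_biprod (A B : C) : cls C (A ⊞ B) = cls C A + cls C B :=
  cls_of_shortExact (ShortComplex.Splitting.ofHasBinaryBiproduct A B).shortExact

lemma cls_of_isZero {Z : C} (hZ : IsZero Z) : cls C Z = 0 := by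
  have h : cls C Z = cls C Z + cls C Z := cls_of_shortExact
    (S := .mk (0 : Z ⟶ Z) (0 : Z ⟶ Z) comp_zero)
    (ShortComplex.Splitting.shortExact ⟨0, 0, hZ.eq_of_src _ _, hZ.eq_of_src _ _,
      hZ.eq_of_src _ _⟩)
  simpa using h

open ZeroObject in
lemma cls_of_iso {A B : C} (e : A ≅ B) : cls C A = cls C B := by
  have h : cls C A = cls C 0 + cls C B := cls_of_shortExact
    (S := .mk (0 : (0 : C) ⟶ A) e.hom zero_comp)
    (ShortComplex.Splitting.shortExact ⟨0, e.inv, (isZero_zero C).eq_of_src _ _, e.inv_hom_id,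
      by simp⟩)
  rwa [cls_of_isZero (isZero_zero C), zero_add] at h

end K0

namespace Z2Cx

/-- The pair of classes `([Z₀(M•)], [Z₁(M•)])` in `K(R) × K(R)` of the cycles of `M•`. On
contractible summands, which the homology does not see, it recovers `([P], [Q])` from
`K_P ⊕ K_Q^†`. -/
def cyclesCls (M : Z2Cx C) : K0 C × K0 C :=
  (K0.cls C (sc0.obj M).cycles, K0.cls C (sc0.obj (dagger C M)).cycles)

lemma cyclesCls_eq_of_iso {M N : Z2Cx C} (e : M ≅ N) : cyclesCls M = cyclesCls N :=
  Prod.ext (K0.cls_of_iso ((sc0 ⋙ ShortComplex.cyclesFunctor C).mapIso e))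
    (K0.cls_of_iso ((daggerFunctor ⋙ sc0 ⋙ ShortComplex.cyclesFunctor C).mapIso e))

lemma cyclesCls_dsum (M N : Z2Cx C) : cyclesCls (dsum C M N) = cyclesCls M + cyclesCls N :=
  Prod.ext
    ((K0.cls_of_iso (mapDsum (sc0 ⋙ ShortComplex.cyclesFunctor C) M N)).trans (K0.cls_biprod _ _))
    ((K0.cls_of_iso
      (mapDsum (daggerFunctor ⋙ sc0 ⋙ ShortComplex.cyclesFunctor C) M N)).trans (K0.cls_biprod _ _))

lemma cyclesCls_dagger (M : Z2Cx C) : cyclesCls (dagger C M) = (cyclesCls M).swap :=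
  Prod.ext rfl
    (K0.cls_of_iso ((sc0 ⋙ ShortComplex.cyclesFunctor C).mapIso (daggerDagger M)))

lemma cyclesCls_KP (P : C) : cyclesCls (KP C P) = (K0.cls C P, 0) := by
  have : Mono (sc0.obj (dagger C (KP C P))).g := inferInstanceAs (Mono (-𝟙 P))
  exact Prod.ext (K0.cls_of_iso (ShortComplex.cyclesIsoX₂ (S := sc0.obj (KP C P)) rfl))
    (K0.cls_of_isZero ((isZero_kernel_of_mono _).of_iso (ShortComplex.cyclesIsoKernel _)))

/-- The contractible complex `K_P ⊕ K_Q^†`. -/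
def Kc (P Q : C) : Z2Cx C := dsum C (KP C P) (dagger C (KP C Q))

lemma cyclesCls_Kc (P Q : C) : cyclesCls (Kc P Q) = (K0.cls C P, K0.cls C Q) := by
  simp [Kc, cyclesCls_dsum, cyclesCls_dagger, cyclesCls_KP]

lemma contractible_Kc (P Q : C) : Contractible (Kc P Q) :=
  (contractible_KP P).dsum (contractible_KP Q).dagger

end Z2Cx

lemma FinCx.Kc {P Q : C} (hP : Projective P) (hQ : Projective Q) : FinCx C (Z2Cx.Kc P Q) :=
  (FinCx.KP hP).dsum (FinCx.dagger_KP hQ)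

end GrothendieckGroup

section Resolutions

variable {C : Type u} [SmallCategory C] [Abelian C]

/-- The short complex `X₁ ⟶ X₂ ⟶ X₃` is a projective resolution of length one of `X₃`. -/
structure IsProjRes (S : ShortComplex C) : Prop where
  shortExact : S.ShortExact
  projective₁ : Projective S.X₁
  projective₂ : Projective S.X₂

namespace Z2Cx

variable {S S' T T' : ShortComplex C}

def H0Cf (hS : S.ShortExact) : H0 C (Cf C S.f) ≅ S.X₃ :=
  haveI := hS.epi_g
  (ShortComplex.HomologyData.ofIsColimitCokernelCofork (sc0.obj (Cf C S.f)) rfl _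
    hS.exact.gIsCokernel).left.homologyIso

lemma isZero_H1_Cf {P Q : C} (f : P ⟶ Q) [Mono f] : IsZero (H1 C (Cf C f)) := by
  rw [H1, ← ShortComplex.exact_iff_isZero_homology, ShortComplex.exact_iff_mono _ rfl]
  assumption

/-- The complex `C_f ⊕ C_g^†` attached to a pair of short exact sequences with first maps `f`
and `g`. -/
def pairCx (S T : ShortComplex C) : Z2Cx C := dsum C (Cf C S.f) (dagger C (Cf C T.f))

def H0PairCx (hS : S.ShortExact) (hT : T.ShortExact) : H0 C (pairCx S T) ≅ S.X₃ :=
  haveI := hT.mono_f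
  H0Dsum _ _ ≪≫ biprod.mapIso (H0Cf hS) (H1IsoH0Dagger _).symm ≪≫
    (isoBiprodZero (isZero_H1_Cf T.f)).symm

def H1PairCx (hS : S.ShortExact) (hT : T.ShortExact) : H1 C (pairCx S T) ≅ T.X₃ :=
  haveI := hS.mono_f
  H1Dsum _ _ ≪≫ biprod.mapIso (Iso.refl _) (H1Dagger _ ≪≫ H0Cf hT) ≪≫
    (isoZeroBiprod (isZero_H1_Cf S.f)).symm

def CfIso (hS : S.ShortExact) (hT : T.ShortExact) (e₂ : S.X₂ ≅ T.X₂) (e₃ : S.X₃ ≅ T.X₃)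
    (comm : S.g ≫ e₃.hom = e₂.hom ≫ T.g) : Cf C S.f ≅ Cf C T.f :=
  haveI := hS.mono_f
  haveI := hT.mono_f
  have hom_w : (S.f ≫ e₂.hom) ≫ T.g = 0 := by simp [← comm]
  have inv_w : (T.f ≫ e₂.inv) ≫ S.g = 0 := by simp [← cancel_mono e₃.hom, comm]
  isoMk (M := Cf C S.f) (N := Cf C T.f) e₂
    { hom := hT.exact.lift _ hom_w
      inv := hS.exact.lift _ inv_w
      hom_inv_id := by simp [Cf, ← cancel_mono S.f]
      inv_hom_id := by simp [Cf, ← cancel_mono T.f] }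
    (by simp [Cf]) (by simp [Cf])

end Z2Cx

/-- The short complex `X₁ ⊞ Q ⟶ X₂ ⊞ Q ⟶ X₃`, the direct sum of `S` with `Q ⟶ Q ⟶ 0`. -/
def stabilize (S : ShortComplex C) (Q : C) : ShortComplex C where
  X₁ := S.X₁ ⊞ Q
  X₂ := S.X₂ ⊞ Q
  X₃ := S.X₃
  f := biprod.map S.f (𝟙 Q)
  g := biprod.desc S.g 0
  zero := by ext <;> simp

lemma stabilize_shortExact {S : ShortComplex C} (hS : S.ShortExact) (Q : C) :
    (stabilize S Q).ShortExact where
  mono_f :=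
    have := hS.mono_f
    inferInstanceAs (Mono (biprod.map S.f (𝟙 Q)))
  epi_g := by
    have : Epi (biprod.inl ≫ biprod.desc S.g (0 : Q ⟶ S.X₃)) := by
      simpa only [biprod.inl_desc] using hS.epi_g
    exact epi_of_epi biprod.inl (biprod.desc S.g 0)
  exact := by
    have := hS.mono_f
    rw [ShortComplex.exact_iff_exact_up_to_refinements]
    intro A (x : A ⟶ S.X₂ ⊞ Q) (hx : x ≫ biprod.desc S.g 0 = 0)
    have hx₁ : (x ≫ biprod.fst) ≫ S.g = 0 := by
      rw [← hx, Category.assoc]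
      congr 1
      ext <;> simp
    refine ⟨A, 𝟙 A, inferInstance, biprod.lift (hS.exact.lift _ hx₁) (x ≫ biprod.snd), ?_⟩
    change 𝟙 A ≫ x = _ ≫ biprod.map S.f (𝟙 Q)
    ext <;> simp

namespace Z2Cx

def CfStabilizeIso (S : ShortComplex C) (Q : C) :
    Cf C (stabilize S Q).f ≅ dsum C (Cf C S.f) (KP C Q) :=
  isoMk (M := Cf C (stabilize S Q).f) (N := dsum C (Cf C S.f) (KP C Q)) (Iso.refl _) (Iso.refl _)
    (show (0 : S.X₂ ⊞ Q ⟶ S.X₁ ⊞ Q) ≫ 𝟙 _ = 𝟙 _ ≫ biprod.map 0 0 by ext <;> simp)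
    (show biprod.map S.f (𝟙 Q) ≫ 𝟙 _ = 𝟙 _ ≫ biprod.map S.f (𝟙 Q) by simp)

lemma schanuel {S T : ShortComplex C} (hS : S.ShortExact) (hT : T.ShortExact)
    (hS₂ : Projective S.X₂) (hT₂ : Projective T.X₂) (e : S.X₃ ≅ T.X₃) :
    Nonempty (dsum C (Cf C S.f) (KP C T.X₂) ≅ dsum C (Cf C T.f) (KP C S.X₂)) := by
  have := hS.epi_g
  have := hT.epi_g
  let s : S.X₂ ⟶ T.X₂ := Projective.factorThru (S.g ≫ e.hom) T.g
  let t : T.X₂ ⟶ S.X₂ := Projective.factorThru (T.g ≫ e.inv) S.g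
  have hs : s ≫ T.g = S.g ≫ e.hom := Projective.factorThru_comp _ _
  have ht : t ≫ S.g = T.g ≫ e.inv := Projective.factorThru_comp _ _
  let shear : S.X₂ ⊞ T.X₂ ≅ T.X₂ ⊞ S.X₂ :=
    Biprod.unipotentLower (-t) ≪≫ Biprod.unipotentUpper s ≪≫ biprod.braiding _ _
  have comm : biprod.desc S.g 0 ≫ e.hom = shear.hom ≫ biprod.desc T.g 0 := by
    ext <;> simp [shear, hs, reassoc_of% ht, Biprod.ofComponents]
  exact ⟨(CfStabilizeIso S T.X₂).symm ≪≫ CfIso (stabilize_shortExact hS _)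
    (stabilize_shortExact hT _) shear e comm ≪≫ CfStabilizeIso T S.X₂⟩

lemma pairCx_stably_iso {S S' T T' : ShortComplex C} (hS : IsProjRes S) (hS' : IsProjRes S')
    (hT : IsProjRes T) (hT' : IsProjRes T') (e : S.X₃ ≅ S'.X₃) (f : T.X₃ ≅ T'.X₃) :
    Nonempty (dsum C (pairCx S T) (Kc S'.X₂ T'.X₂) ≅ dsum C (pairCx S' T') (Kc S.X₂ T.X₂)) := by
  obtain ⟨a⟩ := schanuel hS.shortExact hS'.shortExact hS.projective₂ hS'.projective₂ e
  obtain ⟨b⟩ := schanuel hT.shortExact hT'.shortExact hT.projective₂ hT'.projective₂ f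
  have b' : dsum C (dagger C (Cf C T.f)) (dagger C (KP C T'.X₂)) ≅
      dsum C (dagger C (Cf C T'.f)) (dagger C (KP C T.X₂)) :=
    (daggerDsum _ _).symm ≪≫ daggerFunctor.mapIso b ≪≫ daggerDsum _ _
  exact ⟨dsumExchange _ _ _ _ ≪≫ dsumMapIso a b' ≪≫ dsumExchange _ _ _ _⟩

lemma contractible_pairCx_of_isZero {S T : ShortComplex C} (hS : S.ShortExact) (hT : T.ShortExact)
    (hS₃ : IsZero S.X₃) (hT₃ : IsZero T.X₃) : Contractible (pairCx S T) := by
  have : IsIso S.f := hS.isIso_f_iff.2 hS₃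
  have : IsIso T.f := hT.isIso_f_iff.2 hT₃
  exact (contractible_Cf S.f).dsum (contractible_Cf T.f).dagger

end Z2Cx

end Resolutions

section Decomposition

variable {C : Type u} [SmallCategory C] [Abelian C]

namespace DecData

open Z2Cx

lemma exists_iso_pairCx (dd : DecData C) {M : Z2Cx C} (h0 : Projective M.X0)
    (h1 : Projective M.X1) :
    ∃ S T : ShortComplex C, IsProjRes S ∧ IsProjRes T ∧ Nonempty (M ≅ pairCx S T) := by
  obtain ⟨P, Q, P', Q', f, g, hP, hQ, hP', hQ', hf, hg, e, -, -⟩ := dd.spec M h0 h1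
  have res {A B : C} (j : A ⟶ B) (hj : Mono j) (hA : Projective A) (hB : Projective B) :
      IsProjRes (.mk j (cokernel.π j) (cokernel.condition j)) :=
    ⟨⟨ShortComplex.exact_cokernel j⟩, hA, hB⟩
  exact ⟨_, _, res f hf hP hQ, res g hg hP' hQ', e⟩

lemma contractible_of_acyclic (dd : DecData C) {M : Z2Cx C} (h0 : Projective M.X0)
    (h1 : Projective M.X1) (hM : Acyclic C M) : Contractible M := by
  obtain ⟨S, T, hS, hT, ⟨e⟩⟩ := dd.exists_iso_pairCx h0 h1
  have hS₃ : IsZero S.X₃ :=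
    hM.1.of_iso ((H0PairCx hS.shortExact hT.shortExact).symm ≪≫ (H0MapIso e).symm)
  have hT₃ : IsZero T.X₃ :=
    hM.2.of_iso ((H1PairCx hS.shortExact hT.shortExact).symm ≪≫ (H1MapIso e).symm)
  exact (contractible_pairCx_of_isZero hS.shortExact hT.shortExact hS₃ hT₃).of_iso e.symm

variable [EnoughProjectives C]

/-- For `d` the composite of `f` with an epimorphism from a projective onto `X`, the complex `C_d`
splits as `C_j ⊕ C_g^†`, so the image `X` of `d` is isomorphic to the projective source of `j`. -/
lemma projective_of_mono (dd : DecData C) {X P : C} (f : X ⟶ P) [Mono f] (hP : Projective P) :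
    Projective X := by
  let d : Projective.over X ⟶ P := Projective.π X ≫ f
  obtain ⟨S, T, hS, -, ⟨e⟩⟩ :=
    dd.exists_iso_pairCx (M := Cf C d) hP (Projective.projective_over X)
  have := hS.shortExact.mono_f
  have := hS.projective₁
  let e₀ : P ≅ S.X₂ ⊞ T.X₁ := eval0.mapIso e
  let e₁ : Projective.over X ≅ S.X₁ ⊞ T.X₂ := eval1.mapIso e
  have comm : d ≫ e₀.hom = e₁.hom ≫ biprod.map S.f (-0) := d1_comp_f0 e.hom
  have hd : (e₁.hom ≫ biprod.fst) ≫ S.f ≫ biprod.inl ≫ e₀.inv = d := by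
    rw [← cancel_mono e₀.hom, comm]
    ext <;> simp
  have : StrongEpi (e₁.hom ≫ biprod.fst) := strongEpi_of_epi _
  have : StrongEpi (Projective.π X) := strongEpi_of_epi _
  exact .of_iso (image.isoStrongEpiMono _ _ hd ≪≫
    (image.isoStrongEpiMono (Projective.π X) f rfl).symm) ‹Projective S.X₁›

end DecData

open ZeroObject in
variable (C) in
/-- The submonoid of `K(R) × K(R)` of the effective classes, those of the form `([P], [Q])` with
`P` and `Q` projective. -/
def effectiveClasses : AddSubmonoid (K0 C × K0 C) where
  carrier := {γ | ∃ P Q : C, Projective P ∧ Projective Q ∧ (K0.cls C P, K0.cls C Q) = γ}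
  zero_mem' := ⟨0, 0, inferInstance, inferInstance, by simp [K0.cls_of_isZero (isZero_zero C)]⟩
  add_mem' := by
    rintro _ _ ⟨P, Q, hP, hQ, rfl⟩ ⟨P', Q', hP', hQ', rfl⟩
    exact ⟨P ⊞ P', Q ⊞ Q', inferInstance, inferInstance, by simp [K0.cls_biprod]⟩

namespace DecData

variable [EnoughProjectives C]

lemma exists_eq_cls_sub_cls (dd : DecData C) (x : K0 C) :
    ∃ P Q : C, Projective P ∧ Projective Q ∧ x = K0.cls C P - K0.cls C Q := by
  obtain ⟨y, rfl⟩ := QuotientAddGroup.mk_surjective x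
  have cls (X : C) : ∃ P Q : C, Projective P ∧ Projective Q ∧
      K0.cls C X = K0.cls C P - K0.cls C Q := by
    have hS : (ShortComplex.mk (kernel.ι (Projective.π X)) (Projective.π X)
      (kernel.condition _)).ShortExact := ⟨ShortComplex.exact_kernel _⟩
    exact ⟨Projective.over X, kernel (Projective.π X), Projective.projective_over X,
      dd.projective_of_mono (kernel.ι _) (Projective.projective_over X),
      eq_sub_of_add_eq' (K0.cls_of_shortExact hS).symm⟩
  induction y using FreeAbelianGroup.induction_on with
  | zero => exact ⟨_, _, Projective.zero_projective, Projective.zero_projective, (sub_self _).symm⟩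
  | of X => exact cls X
  | neg X ih =>
    obtain ⟨P, Q, hP, hQ, h⟩ := ih
    exact ⟨Q, P, hQ, hP, by rw [QuotientAddGroup.mk_neg, h, neg_sub]⟩
  | add x y hx hy =>
    obtain ⟨P, Q, hP, hQ, h⟩ := hx
    obtain ⟨P', Q', hP', hQ', h'⟩ := hy
    refine ⟨P ⊞ P', Q ⊞ Q', inferInstance, inferInstance, ?_⟩
    rw [QuotientAddGroup.mk_add, h, h', K0.cls_biprod, K0.cls_biprod, add_sub_add_comm]

lemma exists_add_mem_effectiveClasses (dd : DecData C) (γ : K0 C × K0 C) :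
    ∃ δ ∈ effectiveClasses C, γ + δ ∈ effectiveClasses C := by
  obtain ⟨P, Q, hP, hQ, h₁⟩ := dd.exists_eq_cls_sub_cls γ.1
  obtain ⟨P', Q', hP', hQ', h₂⟩ := dd.exists_eq_cls_sub_cls γ.2
  exact ⟨(K0.cls C Q, K0.cls C Q'), ⟨Q, Q', hQ, hQ', rfl⟩, P, P', hP, hP',
    Prod.ext (by simp [h₁]) (by simp [h₂])⟩

lemma exists_forall_add_mem_effectiveClasses (dd : DecData C) (s : Finset (K0 C × K0 C)) :
    ∃ δ, ∀ γ ∈ s, γ + δ ∈ effectiveClasses C := by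
  choose δ hδ hγδ using dd.exists_add_mem_effectiveClasses
  refine ⟨∑ γ ∈ s, δ γ, fun γ hγ => ?_⟩
  rw [← Finset.add_sum_erase s δ hγ, ← add_assoc]
  exact add_mem (hγδ γ) (sum_mem fun γ' _ => hδ γ')

end DecData

end Decomposition

section HallAlgebra

open Z2Cx

namespace FCx

variable {C : Type u} [SmallCategory C] [Abelian C]

/-- The direct sum of two objects of `C_fin(P)`. -/
def dsum (M N : FCx C) : FCx C := ⟨Z2Cx.dsum C M.1 N.1, M.2.dsum N.2⟩

/-- The contractible complex `K_P ⊕ K_Q^†` as an object of `C_fin(P)`. -/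
def Kc {P Q : C} (hP : Projective P) (hQ : Projective Q) : FCx C := ⟨Z2Cx.Kc P Q, .Kc hP hQ⟩

end FCx

lemma card_hom_Hcx_eq_one {C : Type u} [SmallCategory C] [Abelian C] (M : Z2Cx C) {K : Z2Cx C}
    (hK : Contractible K) : Nat.card (Hcx C M ⟶ Hcx C K) = 1 :=
  Nat.card_eq_one_iff_unique.2
    ⟨⟨fun _ _ => hom_ext (hK.isZero_H0.eq_of_tgt _ _) (hK.isZero_H1.eq_of_tgt _ _)⟩, ⟨0⟩⟩

namespace DHSetting

variable (S : DHSetting k R)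

/-- The image in `DH(R)` of the basis element `[M•]` of the Hall algebra. -/
def brk (M : FCx R) : S.D := S.loc (Finsupp.single (fcls R M) 1)

lemma brk_eq_of_iso {M N : FCx R} (e : M.1 ≅ N.1) : S.brk M = S.brk N := by
  rw [brk, brk, fcls_eq_iff.2 ⟨e⟩]

/-- The power `v ^ r` as a unit of `ℂ`. -/
def vPow (r : ℚ) : ℂˣ :=
  Units.mk0 ((S.v ^ (r : ℝ) : ℝ) : ℂ) (by exact_mod_cast (Real.rpow_pos_of_pos S.v_pos _).ne')

lemma hallCoeff_dsum_ne_zero {M K : Z2Cx R} (h0 : Projective M.X0) (h1 : Projective M.X1)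
    (hK : Contractible K) : hallCoeff S.v S.ed S.dd M K (ccls R (Z2Cx.dsum R M K)) ≠ 0 := by
  have hq : (0 : ℝ) < Fintype.card k := by exact_mod_cast Fintype.card_pos
  rw [hallCoeff, hVal, card_hom_Hcx_eq_one _ hK, extCount_eq_ite h0 h1 hK, if_pos rfl,
    Nat.cast_one, _root_.mul_one, _root_.mul_one]
  exact Complex.ofReal_ne_zero.2
    (div_pos (Real.rpow_pos_of_pos S.v_pos _) (Real.rpow_pos_of_pos hq _)).ne'

lemma exists_mulH_eq_smul (M : FCx R) {K : FCx R} (hK : Contractible K.1) :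
    ∃ u : ℂˣ, S.mulH (Finsupp.single (fcls R M) 1) (Finsupp.single (fcls R K) 1) =
      u • Finsupp.single (fcls R (M.dsum K)) 1 := by
  have hfc2c : fc2c R (fcls R (M.dsum K)) = ccls R (Z2Cx.dsum R M.1 K.1) := rfl
  refine ⟨Units.mk0 _ (S.hallCoeff_dsum_ne_zero M.2.1 M.2.2.1 hK), ?_⟩
  ext c
  rw [S.mulH_single, Units.smul_mk0, Finsupp.smul_apply, Finsupp.single_apply, smul_eq_mul]
  split_ifs with hc
  · rw [← hc, hfc2c, _root_.mul_one]
  · have hc' : fc2c R c ≠ ccls R (Z2Cx.dsum R M.1 K.1) := fun h => hc (fc2c_injective h).symm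
    simp [hallCoeff, extCount_eq_ite M.2.1 M.2.2.1 hK, hc']

lemma linearIndependent_brk {ι : Type*} (L : ι → FCx R)
    (hL : ∀ K : FCx R, Contractible K.1 → ∀ i j,
      Nonempty (((L i).dsum K).1 ≅ ((L j).dsum K).1) → i = j) :
    LinearIndependent ℂ fun i => S.brk (L i) := by
  rw [linearIndependent_iff']
  intro s g hg
  have hloc : S.loc (∑ i ∈ s, g i • Finsupp.single (fcls R (L i)) 1) = 0 := by
    simpa only [map_sum, map_smul, brk] using hg
  obtain ⟨K, hK, hK', hmul⟩ := (S.loc_ker _).1 hloc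
  have hc : Contractible K := S.dd.contractible_of_acyclic hK.1 hK.2.1 hK'
  choose u hu using fun i => S.exists_mulH_eq_smul (L i) (K := ⟨K, hK⟩) hc
  have hinj : Function.Injective fun i => fcls R ((L i).dsum ⟨K, hK⟩) := fun i j hij =>
    hL ⟨K, hK⟩ hc i j (fcls_eq_iff.1 hij)
  have hli := ((Finsupp.linearIndependent_single_one ℂ (FCls R)).comp _ hinj).units_smul u
  refine linearIndependent_iff'.1 hli s g ?_
  simpa only [map_sum, map_smul, LinearMap.sum_apply, LinearMap.smul_apply, hu, Pi.smul_apply',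
    Function.comp_apply] using hmul

lemma mulD_loc_KK_KK (x : FCls R →₀ ℂ) (γ δ : K0 R × K0 R) :
    S.mulD (S.mulD (S.loc x) (S.KK γ)) (S.KK δ) = S.mulD (S.loc x) (S.KK (γ + δ)) := by
  obtain ⟨a, b⟩ := γ
  obtain ⟨a', b'⟩ := δ
  have h := S.mul_general x ⟨zeroCx R, FinCx.zeroCx⟩ a b a' b'
  have hcls : clsOf R (zeroCx R) = 0 := sub_self _
  rw [← S.loc_mul, S.loc_one, S.one_mul, S.mul_one, hcls] at h
  simpa only [Prod.mk_add_mk, sForm, map_zero, AddMonoidHom.zero_apply, add_zero, Rat.cast_zero,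
    Real.rpow_zero, Complex.ofReal_one, one_smul] using h

lemma mulD_KK_KK (d : S.D) (γ δ : K0 R × K0 R) :
    S.mulD (S.mulD d (S.KK γ)) (S.KK δ) = S.mulD d (S.KK (γ + δ)) := by
  obtain ⟨x, a, b, rfl⟩ := S.span d
  simp only [mulD_loc_KK_KK, add_assoc]

lemma exists_brk_mulD_KK (M : FCx R) {P Q : R} (hP : Projective P) (hQ : Projective Q) :
    ∃ u : ℂˣ, S.mulD (S.brk M) (S.KK (K0.cls R P, K0.cls R Q)) =
      u • S.brk (M.dsum (.Kc hP hQ)) := by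
  obtain ⟨s, hs⟩ := S.exists_mulH_eq_smul M (K := .Kc hP hQ) (contractible_Kc P Q)
  obtain ⟨t, ht⟩ := S.exists_mulH_eq_smul ⟨KP R P, .KP hP⟩ (K := ⟨dagger R (KP R Q), .dagger_KP hQ⟩)
    (contractible_KP Q).dagger
  have hKK : S.KK (K0.cls R P, K0.cls R Q) = t • S.brk (.Kc hP hQ) := by
    have h := congrArg S.loc ht
    rwa [← S.loc_mul, S.KK_P P hP, S.KK_Pd Q hQ, S.KK_mul, Prod.mk_add_mk, add_zero, zero_add,
      LinearMap.map_smul_of_tower] at h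
  refine ⟨t * s, ?_⟩
  rw [hKK, brk, brk, LinearMap.map_smul_of_tower, S.loc_mul, hs, LinearMap.map_smul_of_tower,
    mul_smul]
  rfl

lemma exists_Eelt_eq_smul (M : FCx R) : ∃ u : ℂˣ,
    Eelt S M.1 M.2 = u • S.mulD (S.brk M) (S.KK (-(S.dd.cplus M.1, S.dd.cminus M.1))) :=
  ⟨S.vPow (S.ed.eQ (S.dd.cplus M.1 - S.dd.cminus M.1) (clsOf R M.1)) *
      S.vPow (sForm k R S.ed (-S.dd.cplus M.1 - -S.dd.cminus M.1) (clsOf R M.1)),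
    (congrArg _ (S.comm_rule _ _ M)).trans (smul_smul _ _ _)⟩

end DHSetting

end HallAlgebra

section Basis

open Z2Cx

section ResolutionData

variable {C : Type u} [SmallCategory C]

variable (C) in
/-- A choice, for every isomorphism class of objects of `A`, of a projective resolution of length
one of a representative. -/
structure ResolutionData [Abelian C] where
  seq : IsoA C → ShortComplex C
  isProjRes : ∀ a, IsProjRes (seq a)
  iso : ∀ a, (seq a).X₃ ≅ (Quot.out a).1

namespace ResolutionData

variable [Abelian C] (r : ResolutionData C)

def H0Iso (p : IsoA C × IsoA C) :
    H0 C (pairCx (r.seq p.1) (r.seq p.2)) ≅ (Quot.out p.1).1 :=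
  H0PairCx (r.isProjRes _).shortExact (r.isProjRes _).shortExact ≪≫ r.iso _

def H1Iso (p : IsoA C × IsoA C) :
    H1 C (pairCx (r.seq p.1) (r.seq p.2)) ≅ (Quot.out p.2).1 :=
  H1PairCx (r.isProjRes _).shortExact (r.isProjRes _).shortExact ≪≫ r.iso _

/-- The complex `C_A ⊕ C_B^†` attached to the isomorphism classes of `A` and `B`. -/
def cx (p : IsoA C × IsoA C) : FCx C :=
  have := (r.isProjRes p.1).projective₁
  have := (r.isProjRes p.1).projective₂
  have := (r.isProjRes p.2).projective₁
  have := (r.isProjRes p.2).projective₂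
  ⟨pairCx (r.seq p.1) (r.seq p.2),
    inferInstanceAs (Projective ((r.seq p.1).X₂ ⊞ (r.seq p.2).X₁)),
    inferInstanceAs (Projective ((r.seq p.1).X₁ ⊞ (r.seq p.2).X₂)),
    (Quot.out p.1).2.of_iso (r.H0Iso p).symm, (Quot.out p.2).2.of_iso (r.H1Iso p).symm⟩

lemma eq_of_cx_dsum_iso {p p' : IsoA C × IsoA C} {K K' : Z2Cx C} (hK : Contractible K)
    (hK' : Contractible K') (e : Z2Cx.dsum C (r.cx p).1 K ≅ Z2Cx.dsum C (r.cx p').1 K') :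
    p = p' :=
  Prod.ext
    (IsoA.ext ((r.H0Iso p).symm ≪≫ (hK.H0Dsum _).symm ≪≫ H0MapIso e ≪≫ hK'.H0Dsum _ ≪≫ r.H0Iso p'))
    (IsoA.ext ((r.H1Iso p).symm ≪≫ (hK.H1Dsum _).symm ≪≫ H1MapIso e ≪≫ hK'.H1Dsum _ ≪≫ r.H1Iso p'))

lemma eq_of_cx_dsum_Kc_dsum_iso {p p' : IsoA C × IsoA C} {P Q P' Q' : C} (hP : Projective P)
    (hQ : Projective Q) (hP' : Projective P') (hQ' : Projective Q') {K : FCx C}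
    (hK : Contractible K.1)
    (e : (((r.cx p).dsum (.Kc hP hQ)).dsum K).1 ≅ (((r.cx p').dsum (.Kc hP' hQ')).dsum K).1) :
    p = p' ∧ (K0.cls C P, K0.cls C Q) = (K0.cls C P', K0.cls C Q') := by
  obtain rfl : p = p' := r.eq_of_cx_dsum_iso ((contractible_Kc P Q).dsum hK)
    ((contractible_Kc P' Q').dsum hK) ((dsumAssoc _ _ _).symm ≪≫ e ≪≫ dsumAssoc _ _ _)
  have h : cyclesCls (Z2Cx.dsum C (Z2Cx.dsum C (r.cx p).1 (Kc P Q)) K.1) =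
      cyclesCls (Z2Cx.dsum C (Z2Cx.dsum C (r.cx p).1 (Kc P' Q')) K.1) := cyclesCls_eq_of_iso e
  simp only [cyclesCls_dsum, cyclesCls_Kc] at h
  exact ⟨rfl, add_left_cancel (add_right_cancel h)⟩

end ResolutionData

end ResolutionData

namespace DHSetting

variable (S : DHSetting k R) (r : ResolutionData R)

/-- The element `[C_A ⊕ C_B^†] ⋆ K_α ⋆ K_β^†` of `DH(R)`. -/
def brkKK (i : (IsoA R × IsoA R) × (K0 R × K0 R)) : S.D := S.mulD (S.brk (r.cx i.1)) (S.KK i.2)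

lemma linearIndependent_brkKK : LinearIndependent ℂ (S.brkKK r) := by
  rw [linearIndependent_iff_finset_linearIndependent]
  intro s
  classical
  obtain ⟨δ, hδ⟩ := S.dd.exists_forall_add_mem_effectiveClasses (s.image Prod.snd)
  choose P Q hP hQ hPQ using fun i : s => hδ i.1.2 (Finset.mem_image_of_mem _ i.2)
  let L (i : s) : FCx R := (r.cx i.1.1).dsum (.Kc (hP i) (hQ i))
  choose u hu using fun i : s => S.exists_brk_mulD_KK (r.cx i.1.1) (hP i) (hQ i)
  have hL : LinearIndependent ℂ fun i => S.brk (L i) := by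
    refine S.linearIndependent_brk L fun K hK i j ⟨e⟩ => ?_
    obtain ⟨h₁, h₂⟩ := r.eq_of_cx_dsum_Kc_dsum_iso (hP i) (hQ i) (hP j) (hQ j) hK e
    rw [hPQ, hPQ] at h₂
    exact Subtype.ext (Prod.ext h₁ (add_right_cancel h₂))
  have key : u • (fun i => S.brk (L i)) = S.mulD.flip (S.KK δ) ∘ S.brkKK r ∘ Subtype.val := by
    funext i
    simp only [Function.comp_apply, LinearMap.flip_apply, brkKK, mulD_KK_KK, ← hPQ]
    exact (hu i).symm
  refine .of_comp (S.mulD.flip (S.KK δ)) ?_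
  rw [← key]
  exact hL.units_smul u

lemma exists_brk_eq_smul_brkKK (M : FCx R) : ∃ (u : ℂˣ) (p : IsoA R × IsoA R) (γ : K0 R × K0 R),
    S.brk M = u • S.brkKK r (p, γ) := by
  obtain ⟨A, B, hA, hB, ⟨e⟩⟩ := S.dd.exists_iso_pairCx M.2.1 M.2.2.1
  obtain ⟨a, ⟨ea⟩⟩ := IsoA.exists_out_iso
    (M.2.2.2.1.of_iso (H0MapIso e ≪≫ H0PairCx hA.shortExact hB.shortExact))
  obtain ⟨b, ⟨eb⟩⟩ := IsoA.exists_out_iso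
    (M.2.2.2.2.of_iso (H1MapIso e ≪≫ H1PairCx hA.shortExact hB.shortExact))
  have ha := r.isProjRes a
  have hb := r.isProjRes b
  obtain ⟨σ⟩ := pairCx_stably_iso hA ha hB hb (ea.symm ≪≫ (r.iso a).symm)
    (eb.symm ≪≫ (r.iso b).symm)
  obtain ⟨s, hs⟩ := S.exists_brk_mulD_KK M ha.projective₂ hb.projective₂
  obtain ⟨t, ht⟩ := S.exists_brk_mulD_KK (r.cx (a, b)) hA.projective₂ hB.projective₂
  have hst : S.brk (M.dsum (.Kc ha.projective₂ hb.projective₂)) =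
      S.brk ((r.cx (a, b)).dsum (.Kc hA.projective₂ hB.projective₂)) :=
    S.brk_eq_of_iso (dsumMapIso e (Iso.refl _) ≪≫ σ)
  set β := (K0.cls R (r.seq a).X₂, K0.cls R (r.seq b).X₂)
  refine ⟨s * t⁻¹, (a, b), (K0.cls R A.X₂, K0.cls R B.X₂) + -β, ?_⟩
  calc S.brk M = S.mulD (S.mulD (S.brk M) (S.KK β)) (S.KK (-β)) := by
        rw [mulD_KK_KK, add_neg_cancel, S.KK_zero, S.mul_one]
    _ = (s * t⁻¹) • S.mulD (S.mulD (S.brk (r.cx (a, b))) (S.KK (K0.cls R A.X₂, K0.cls R B.X₂)))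
          (S.KK (-β)) := by
        rw [hs, ht, hst, LinearMap.map_smul_of_tower, LinearMap.map_smul_of_tower,
          LinearMap.smul_apply, LinearMap.smul_apply, mul_smul, inv_smul_smul]
    _ = _ := by rw [mulD_KK_KK, brkKK]

lemma span_brkKK : ⊤ ≤ Submodule.span ℂ (Set.range (S.brkKK r)) := by
  rintro d -
  obtain ⟨x, a, b, rfl⟩ := S.span d
  induction x using Finsupp.induction_linear with
  | zero => simp
  | add x y hx hy => simpa only [map_add, LinearMap.add_apply] using add_mem hx hy
  | single c z =>
    obtain ⟨M, rfl⟩ : ∃ M, fcls R M = c := Quot.exists_rep c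
    obtain ⟨u, p, γ, hM⟩ := S.exists_brk_eq_smul_brkKK r M
    have hz : S.loc (Finsupp.single (fcls R M) z) = z • S.brk M := by
      rw [brk, ← map_smul, Finsupp.smul_single_one]
    rw [hz, hM, map_smul, LinearMap.map_smul_of_tower, LinearMap.smul_apply,
      LinearMap.smul_apply, brkKK, mulD_KK_KK]
    exact Submodule.smul_mem _ z (Submodule.smul_mem _ (u : ℂ)
      (Submodule.subset_span ⟨(p, γ + (a, b)), rfl⟩))

theorem exists_basis_Eelt : ∃ b : Module.Basis ((IsoA R × IsoA R) × (K0 R × K0 R)) ℂ S.D,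
    ∀ p γ, b (p, γ) = S.mulD (Eelt S (r.cx p).1 (r.cx p).2) (S.KK γ) := by
  choose u hu using fun p => S.exists_Eelt_eq_smul (r.cx p)
  let shift : (IsoA R × IsoA R) × (K0 R × K0 R) ≃ (IsoA R × IsoA R) × (K0 R × K0 R) :=
    (Equiv.refl _).prodShear fun p =>
      Equiv.addRight (S.dd.cplus (r.cx p).1, S.dd.cminus (r.cx p).1)
  let b := Module.Basis.mk (S.linearIndependent_brkKK r) (S.span_brkKK r)
  refine ⟨(b.reindex shift).unitsSMul fun i => u i.1, fun p γ => ?_⟩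
  rw [hu, LinearMap.map_smul_of_tower, LinearMap.smul_apply, mulD_KK_KK, add_comm]
  simp [b, shift, brkKK, Module.Basis.unitsSMul_apply]

end DHSetting

end Basis

lemma bijective_sum_sum_smul_basis {ι κ A M : Type*} [Semiring A] [AddCommMonoid M] [Module A M]
    (b : Module.Basis (ι × κ) A M) :
    Function.Bijective fun m : ι →₀ κ →₀ A => m.sum fun i r => r.sum fun j c => c • b (i, j) := by
  convert ((Finsupp.curryLinearEquiv A).symm.trans b.repr.symm).bijective using 1
  funext m
  obtain ⟨n, rfl⟩ := (Finsupp.curryLinearEquiv A).surjective m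
  simp only [LinearEquiv.trans_apply, LinearEquiv.symm_apply_apply, Module.Basis.repr_symm_apply,
    Finsupp.linearCombination_apply]
  exact Finsupp.sum_curry_index n fun i j c => c • b (i, j)

theorem stmt11_general (S : DHSetting k R)
    (rP rQ : R → R) (rf : ∀ C : R, rP C ⟶ rQ C) (rπ : ∀ C : R, rQ C ⟶ C)
    (hres : ∀ C : R, IsFinHom R C → Projective (rP C) ∧ Projective (rQ C) ∧
      ∃ w : rf C ≫ rπ C = 0, (ShortComplex.mk (rf C) (rπ C) w).ShortExact)
    (hfds : ∀ A B : R, IsFinHom R A → IsFinHom R B →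
      FinCx R (Z2Cx.dsum R (Z2Cx.Cf R (rf A)) (Z2Cx.dagger R (Z2Cx.Cf R (rf B))))) :
    Function.Bijective (fun m : (IsoA R × IsoA R) →₀ ((K0 R × K0 R) →₀ ℂ) =>
      m.sum fun p r => r.sum fun γ c => c •
        S.mulD
          (Eelt S
            (Z2Cx.dsum R (Z2Cx.Cf R (rf (Quot.out p.1).1))
              (Z2Cx.dagger R (Z2Cx.Cf R (rf (Quot.out p.2).1))))
            (hfds (Quot.out p.1).1 (Quot.out p.2).1 (Quot.out p.1).2 (Quot.out p.2).2))
          (S.KK γ)) := by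
  choose hP hQ w hw using hres
  let r : ResolutionData R :=
    { seq a := .mk _ _ (w _ (Quot.out a).2)
      isProjRes a := ⟨hw _ (Quot.out a).2, hP _ (Quot.out a).2, hQ _ (Quot.out a).2⟩
      iso _ := Iso.refl _ }
  obtain ⟨b, hb⟩ := S.exists_basis_Eelt r
  have h := bijective_sum_sum_smul_basis b
  simp only [hb] at h
  exact h

theorem stmt11 (hH : Hereditary k R) (hc : CondC R) (hd : CondD R) (he : CondE R)
    (S : DHSetting k R)
    -- a fixed choice of projective resolution `0 → P_C → Q_C → C → 0` for each object
    (rP rQ : R → R) (rf : ∀ C : R, rP C ⟶ rQ C) (rπ : ∀ C : R, rQ C ⟶ C)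
    (hres : ∀ C : R, IsFinHom R C → Projective (rP C) ∧ Projective (rQ C) ∧
      ∃ w : rf C ≫ rπ C = 0, (ShortComplex.mk (rf C) (rπ C) w).ShortExact)
    (hfds : ∀ A B : R, IsFinHom R A → IsFinHom R B →
      FinCx R (Z2Cx.dsum R (Z2Cx.Cf R (rf A)) (Z2Cx.dagger R (Z2Cx.Cf R (rf B))))) :
    -- `DH(R)` is free as a right `DH₀(R) = ℂ[K(R) × K(R)]`-module with
    -- basis `{E_{A,B}}`; i.e. the evaluation map below is bijective.
    Function.Bijective (fun m : (IsoA R × IsoA R) →₀ ((K0 R × K0 R) →₀ ℂ) =>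
      m.sum fun p r => r.sum fun γ c => c •
        S.mulD
          (Eelt S
            (Z2Cx.dsum R (Z2Cx.Cf R (rf (Quot.out p.1).1))
              (Z2Cx.dagger R (Z2Cx.Cf R (rf (Quot.out p.2).1))))
            (hfds (Quot.out p.1).1 (Quot.out p.2).1 (Quot.out p.1).2 (Quot.out p.2).2))
          (S.KK γ)) :=
  stmt11_general S rP rQ rf rπ hres hfds

end
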